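/- arXiv:2103.14246 — 2 statements merged into one kernel-verified Lean document; each statement's English description precedes it below -/
import Mathlib

section
/- With the one-step Bellman setup and assuming square-integrability of all displayed random variables, the conditional variances of the two estimators satisfy, almost surely, Var[Ŷ^noiseless | 𝒢] = 0 and Var[Ŷ^re-est | 𝒢] = Var[δ^hot | 𝒢], where Ŷ^re-est := Ṽ(X') − ΔŶ, Ŷ^noiseless := L(X) + Ȳ + ½ tr(M̄), and Var[ξ | 𝒢] := E[(ξ − E[ξ|𝒢])² | 𝒢]. -/
open MeasureTheory ProbabilityTheory Matrix

/-- The standard Gaussian measure on `ℝⁿ` (coordinates i.i.d. `N(0,1)`). -/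
noncomputable def stdGaussian (n : ℕ) : Measure (Fin n → ℝ) :=
  Measure.pi fun _ => gaussianReal 0 1

/-- The gradient of `f : ℝⁿ → ℝ`, as a vector of partial derivatives. -/
noncomputable def grad {n : ℕ} (f : (Fin n → ℝ) → ℝ) (x : Fin n → ℝ) : Fin n → ℝ :=
  fun i => fderiv ℝ f x (Pi.single i 1)

/-- The Hessian matrix of `f : ℝⁿ → ℝ`. -/
noncomputable def hess {n : ℕ} (f : (Fin n → ℝ) → ℝ) (x : Fin n → ℝ) :
    Matrix (Fin n) (Fin n) ℝ :=
  Matrix.of fun i j => fderiv ℝ (fun y => fderiv ℝ f y (Pi.single j 1)) x (Pi.single i 1)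

/-- **Conditional variances of the noiseless and re-estimate estimators.**
With the one-step Bellman setup and square-integrability of the displayed random variables,
almost surely `Var[Ŷ^noiseless | 𝒢] = 0` and `Var[Ŷ^re-est | 𝒢] = Var[δ^hot | 𝒢]`, where
`Var[ξ|𝒢] := E[(ξ − E[ξ|𝒢])²|𝒢]`. -/
theorem reestimate_noiseless_variance
    {Ω : Type*} (𝒢 : MeasurableSpace Ω) [mΩ : MeasurableSpace Ω]
    (P : Measure Ω) [IsProbabilityMeasure P]
    {n : ℕ} (h𝒢 : 𝒢 ≤ mΩ)
    -- the noise W : i.i.d. standard normal coordinates, independent of 𝒢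
    (W : Ω → Fin n → ℝ) (hWmeas : Measurable W)
    (hWlaw : Measure.map W P = stdGaussian n)
    (hWindep : Indep (MeasurableSpace.comap W inferInstance) 𝒢 P)
    -- the current state X is 𝒢-measurable; dynamics data F, Σ, L
    (X : Ω → Fin n → ℝ) (hX : Measurable[𝒢] X)
    (F : (Fin n → ℝ) → Fin n → ℝ) (hF : Measurable F)
    (S : (Fin n → ℝ) → Matrix (Fin n) (Fin n) ℝ) (hS : ∀ i j, Measurable fun x => S x i j)
    (L : (Fin n → ℝ) → ℝ) (hL : Measurable L)
    -- X̄ := X + F(X), X' := X̄ + Σ(X) W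
    (Xb : Ω → Fin n → ℝ) (hXb : ∀ ω, Xb ω = X ω + F (X ω))
    (X' : Ω → Fin n → ℝ) (hX' : ∀ ω, X' ω = Xb ω + (S (X ω)).mulVec (W ω))
    -- the C² value function approximation Ṽ and associated Ȳ, Z̄, M̄
    (Vt : (Fin n → ℝ) → ℝ) (hVt : ContDiff ℝ 2 Vt)
    (Zb : Ω → Fin n → ℝ) (hZb : ∀ ω, Zb ω = (S (X ω))ᵀ.mulVec (grad Vt (Xb ω)))
    (Mb : Ω → Matrix (Fin n) (Fin n) ℝ)
    (hMb : ∀ ω, Mb ω = (S (X ω))ᵀ * hess Vt (Xb ω) * S (X ω))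
    -- the Taylor remainder δ^hot
    (δhot : Ω → ℝ)
    (hδhot : ∀ ω, δhot ω = Vt (X' ω) - (Vt (Xb ω) + (∑ i, Zb ω i * W ω i)
      + (1 / 2) * ∑ i, W ω i * (Mb ω).mulVec (W ω) i))
    -- the Taylor estimator ΔŶ and the re-estimate and noiseless estimators
    (ΔYh : Ω → ℝ)
    (hΔYh : ∀ ω, ΔYh ω = -L (X ω) + (∑ i, Zb ω i * W ω i)
      + (1 / 2) * Matrix.trace (Mb ω * (Matrix.vecMulVec (W ω) (W ω) - 1)))
    (Yre : Ω → ℝ) (hYre : ∀ ω, Yre ω = Vt (X' ω) - ΔYh ω)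
    (Ynl : Ω → ℝ)
    (hYnl : ∀ ω, Ynl ω = L (X ω) + Vt (Xb ω) + (1 / 2) * Matrix.trace (Mb ω))
    -- square-integrability of all displayed random variables
    (hYre2 : MemLp Yre 2 P) (hYnl2 : MemLp Ynl 2 P) (hδhot2 : MemLp δhot 2 P)
    (hΔYh2 : MemLp ΔYh 2 P) (hVtX'2 : MemLp (fun ω => Vt (X' ω)) 2 P)
    (hVtXb2 : MemLp (fun ω => Vt (Xb ω)) 2 P) (hL2 : MemLp (fun ω => L (X ω)) 2 P)
    (hZb2 : ∀ i, MemLp (fun ω => Zb ω i) 2 P)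
    (hMb2 : ∀ i j, MemLp (fun ω => Mb ω i j) 2 P) :
    P[fun ω => (Ynl ω - (P[Ynl|𝒢]) ω) ^ 2|𝒢] =ᵐ[P] 0 ∧
      P[fun ω => (Yre ω - (P[Yre|𝒢]) ω) ^ 2|𝒢]
        =ᵐ[P] P[fun ω => (δhot ω - (P[δhot|𝒢]) ω) ^ 2|𝒢] := by
  have hXbm : Measurable[𝒢] Xb := by
    have h : Xb = (fun x => x + F x) ∘ X := funext hXb
    rw [h]
    exact (measurable_id.add hF).comp hX
  have hhess : ∀ i j, Measurable fun x => hess Vt x i j := by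
    intro i j
    have h1 : ContDiff ℝ 1 (fun y => fderiv ℝ Vt y (Pi.single j 1)) :=
      (hVt.fderiv_right (m := 1) (by norm_num)).clm_apply contDiff_const
    have h2 : Continuous fun x => fderiv ℝ (fun y => fderiv ℝ Vt y (Pi.single j 1)) x :=
      h1.continuous_fderiv (by norm_num)
    exact (h2.clm_apply continuous_const).measurable
  have hYm : Measurable[𝒢] Ynl := by
    have h : Ynl = (fun p : (Fin n → ℝ) × (Fin n → ℝ) => L p.1 + Vt p.2
        + (1 / 2) * Matrix.trace ((S p.1)ᵀ * hess Vt p.2 * S p.1)) ∘ (fun ω => (X ω, Xb ω)) := by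
      funext ω
      simp [hYnl, hMb]
    rw [h]
    refine Measurable.comp ?_ (hX.prodMk hXbm)
    have hV : Measurable Vt := hVt.continuous.measurable
    have hS1 : ∀ i j, Measurable fun p : (Fin n → ℝ) × (Fin n → ℝ) => S p.1 i j :=
      fun i j => (hS i j).comp measurable_fst
    have hH : ∀ i j, Measurable fun p : (Fin n → ℝ) × (Fin n → ℝ) => hess Vt p.2 i j :=
      fun i j => (hhess i j).comp measurable_snd
    simp only [Matrix.trace, Matrix.diag, Matrix.mul_apply, Matrix.transpose_apply]
    refine ((hL.comp measurable_fst).add (hV.comp measurable_snd)).add (Measurable.const_mul ?_ _)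
    refine Finset.measurable_sum _ fun i _ => Finset.measurable_sum _ fun j _ => ?_
    exact (Finset.measurable_sum _ fun k _ => (hS1 k i).mul (hH k j)).mul (hS1 j i)
  have hYint : Integrable Ynl P := hYnl2.integrable (by norm_num)
  have hδint : Integrable δhot P := hδhot2.integrable (by norm_num)
  have hce : P[Ynl|𝒢] = Ynl := condExp_of_stronglyMeasurable h𝒢 hYm.stronglyMeasurable hYint
  have hdecomp : Yre = δhot + Ynl := by
    funext ω
    have ht : Matrix.trace (Mb ω * Matrix.vecMulVec (W ω) (W ω))
        = ∑ i, W ω i * (Mb ω).mulVec (W ω) i := by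
      simp only [Matrix.trace, Matrix.diag, Matrix.mul_apply, Matrix.vecMulVec_apply,
        Matrix.mulVec, dotProduct, Finset.mul_sum]
      exact Finset.sum_congr rfl fun i _ => Finset.sum_congr rfl fun j _ => by ring
    rw [Pi.add_apply, hYre, hΔYh, hδhot, hYnl, Matrix.mul_sub, Matrix.trace_sub, ht,
      Matrix.mul_one]
    ring
  refine ⟨?_, ?_⟩
  · rw [hce]
    have h0 : (fun ω => (Ynl ω - Ynl ω) ^ 2) = (0 : Ω → ℝ) := by
      funext ω
      simp
    rw [h0, condExp_zero]
  · apply condExp_congr_ae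
    have hadd := condExp_add hδint hYint 𝒢
    rw [← hdecomp, hce] at hadd
    filter_upwards [hadd] with ω hω
    rw [hω, hdecomp]
    simp
end

section
/- Let W₀,…,W_{N−1} : Ω → ℝⁿ be mutually independent random vectors, each with i.i.d. standard normal coordinates, and let D₀,…,D_{N−1} : Ω → ℝⁿ be bounded measurable random vectors such that for each i the vector W_i is independent of the σ-algebra generated by (W₀,…,W_{i−1}, D₀,…,D_i). Define Θ_N := exp(∑_{j=0}^{N−1} (−½‖D_j‖² + ⟨D_j, W_j⟩)) and Q := P.withDensity(Θ_N). Then Q is a probability measure, and under Q the random vectors W_i^Q := W_i − D_i, i = 0,…,N−1, are mutually independent and each has i.i.d. standard normal coordinates. -/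
open MeasureTheory ProbabilityTheory

open scoped ENNReal

/-- One step of the likelihood ratio. -/
noncomputable def girsanovStep {n : ℕ} (d w : Fin n → ℝ) : ℝ≥0∞ :=
  ENNReal.ofReal (Real.exp (-(1 / 2) * (∑ k, (d k) ^ 2) + ∑ k, d k * w k))

lemma measurable_girsanov_term {α : Type*} {mα : MeasurableSpace α} {n : ℕ}
    {f g : α → Fin n → ℝ} (hf : Measurable f) (hg : Measurable g)
    {B : Set (Fin n → ℝ)} (hB : MeasurableSet B) :
    Measurable fun a => girsanovStep (f a) (g a) * B.indicator (1 : (Fin n → ℝ) → ℝ≥0∞)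
      (g a - f a) := by
  have h1 : Measurable fun a => girsanovStep (f a) (g a) := by
    unfold girsanovStep
    fun_prop
  exact h1.mul ((measurable_one.indicator hB).comp (hg.sub hf))

lemma girsanov_one_dim (d : ℝ) {s : Set ℝ} (hs : MeasurableSet s) :
    ∫⁻ x, ENNReal.ofReal (Real.exp (-(1 / 2) * d ^ 2 + d * x)) * s.indicator 1 (x - d)
      ∂(gaussianReal 0 1) = gaussianReal 0 1 s := by
  have hm : Measurable (fun x : ℝ => s.indicator (1 : ℝ → ℝ≥0∞) (x - d)) :=
    (measurable_one.indicator hs).comp (by fun_prop)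
  have h1 : gaussianReal 0 1 s = ∫⁻ x, s.indicator (1 : ℝ → ℝ≥0∞) (x - d) ∂(gaussianReal d 1) := by
    have : gaussianReal 0 1 = (gaussianReal d 1).map (fun x => x - d) := by
      rw [gaussianReal_map_sub_const, sub_self]
    rw [this, ← lintegral_map (f := s.indicator (1 : ℝ → ℝ≥0∞)) (measurable_one.indicator hs)
      (by fun_prop), lintegral_indicator_one hs]
  rw [h1, gaussianReal_of_var_ne_zero 0 one_ne_zero, gaussianReal_of_var_ne_zero d one_ne_zero,
    lintegral_withDensity_eq_lintegral_mul _ (measurable_gaussianPDF _ _) (by fun_prop),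
    lintegral_withDensity_eq_lintegral_mul _ (measurable_gaussianPDF _ _) hm]
  refine lintegral_congr fun x => ?_
  simp only [Pi.mul_apply]
  rw [← mul_assoc, gaussianPDF, gaussianPDF, ← ENNReal.ofReal_mul (gaussianPDFReal_nonneg _ _ _)]
  congr 2
  simp only [gaussianPDFReal]
  rw [mul_assoc, ← Real.exp_add]
  congr 2
  push_cast
  ring

lemma girsanov_map {n : ℕ} (d : Fin n → ℝ) :
    (((Measure.pi fun _ : Fin n => gaussianReal 0 1).withDensity (girsanovStep d)).map
      (fun w => w - d)) = Measure.pi fun _ => gaussianReal 0 1 := by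
  symm
  have hmS : Measurable (girsanovStep d) := by
    unfold girsanovStep
    fun_prop
  refine Measure.pi_eq fun s hs => ?_
  have hsm : Measurable fun w : Fin n → ℝ => w - d := by fun_prop
  have hpi : MeasurableSet (Set.univ.pi s) := MeasurableSet.univ_pi hs
  rw [Measure.map_apply hsm hpi, withDensity_apply _ (hsm hpi),
    ← lintegral_indicator (hsm hpi)]
  have hind : iIndepFun (fun (i : Fin n) (w : Fin n → ℝ) =>
      ENNReal.ofReal (Real.exp (-(1 / 2) * d i ^ 2 + d i * w i)) *
        (s i).indicator (1 : ℝ → ℝ≥0∞) (w i - d i)) (Measure.pi fun _ => gaussianReal 0 1) := by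
    refine iIndepFun_pi (X := fun i x => ENNReal.ofReal (Real.exp (-(1 / 2) * d i ^ 2 + d i * x)) *
        (s i).indicator (1 : ℝ → ℝ≥0∞) (x - d i)) fun i => Measurable.aemeasurable ?_
    exact Measurable.mul (by fun_prop)
      ((measurable_one.indicator (hs i)).comp (measurable_id.sub_const _))
  have hm : ∀ i, Measurable fun x : ℝ => ENNReal.ofReal (Real.exp (-(1 / 2) * d i ^ 2 + d i * x)) *
        (s i).indicator (1 : ℝ → ℝ≥0∞) (x - d i) := fun i =>
    Measurable.mul (by fun_prop)
      ((measurable_one.indicator (hs i)).comp (measurable_id.sub_const _))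
  have h2 := lintegral_prod_eq_prod_lintegral_of_indepFun Finset.univ _ hind
    (fun i => (hm i).comp (measurable_pi_apply i))
  have h3 : ∀ i, ∫⁻ w : Fin n → ℝ, ENNReal.ofReal (Real.exp (-(1 / 2) * d i ^ 2 + d i * w i)) *
        (s i).indicator (1 : ℝ → ℝ≥0∞) (w i - d i) ∂(Measure.pi fun _ => gaussianReal 0 1)
      = gaussianReal 0 1 (s i) := fun i => by
    rw [← girsanov_one_dim (d i) (hs i),
      ← (measurePreserving_eval (fun _ : Fin n => gaussianReal 0 1) i).lintegral_comp (hm i)]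
  simp only [h3] at h2
  rw [← h2]
  refine lintegral_congr fun w => ?_
  rw [Finset.prod_mul_distrib, ← ENNReal.ofReal_prod_of_nonneg (fun _ _ => (Real.exp_pos _).le),
    ← Real.exp_sum, Finset.sum_add_distrib, ← Finset.mul_sum]
  by_cases hw : w - d ∈ Set.univ.pi s
  · have : ∀ i, (s i).indicator (1 : ℝ → ℝ≥0∞) (w i - d i) = 1 := fun i => by
      have := hw i (Set.mem_univ i)
      simp only [Pi.sub_apply] at this
      simp [this]
    rw [Set.indicator_of_mem (show w ∈ (fun w => w - d) ⁻¹' Set.univ.pi s from hw)]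
    simp [this, girsanovStep]
  · rw [Set.indicator_of_notMem (show w ∉ (fun w => w - d) ⁻¹' Set.univ.pi s from hw)]
    have : ∃ i, w i - d i ∉ s i := by
      by_contra hcon
      push Not at hcon
      exact hw fun i _ => hcon i
    obtain ⟨i, hi⟩ := this
    rw [Finset.prod_eq_zero (Finset.mem_univ i), mul_zero]
    simp [hi]

lemma girsanov_lintegral {n : ℕ} (d : Fin n → ℝ) {B : Set (Fin n → ℝ)} (hB : MeasurableSet B) :
    ∫⁻ w, girsanovStep d w * B.indicator 1 (w - d) ∂(_root_.stdGaussian n)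
      = _root_.stdGaussian n B := by
  have hmS : Measurable (girsanovStep d) := by
    unfold girsanovStep
    fun_prop
  have hsm : Measurable fun w : Fin n → ℝ => w - d := by fun_prop
  unfold _root_.stdGaussian
  conv_rhs => rw [← girsanov_map d]
  rw [Measure.map_apply hsm hB, withDensity_apply _ (hsm hB), ← lintegral_indicator (hsm hB)]
  refine lintegral_congr fun w => ?_
  by_cases hw : w - d ∈ B <;> simp [Set.indicator, hw]

lemma girsanov_partial
    {Ω : Type*} [mΩ : MeasurableSpace Ω]
    (P : Measure Ω) [IsProbabilityMeasure P]
    {n N : ℕ}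
    (W D : Fin N → Ω → Fin n → ℝ)
    (hWmeas : ∀ i, Measurable (W i)) (hDmeas : ∀ i, Measurable (D i))
    (hWlaw : ∀ i, Measure.map (W i) P = _root_.stdGaussian n)
    (hWpast : ∀ i : Fin N,
      Indep (MeasurableSpace.comap (W i) inferInstance)
        ((⨆ j : Fin N, ⨆ _ : j < i, MeasurableSpace.comap (W j) inferInstance) ⊔
          (⨆ j : Fin N, ⨆ _ : j ≤ i, MeasurableSpace.comap (D j) inferInstance)) P)
    (B : Fin N → Set (Fin n → ℝ)) (hB : ∀ i, MeasurableSet (B i)) (m : ℕ) (hm : m ≤ N) :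
    ∫⁻ ω, ∏ j with j.val < m,
      (girsanovStep (D j ω) (W j ω) * (B j).indicator 1 (W j ω - D j ω)) ∂P
      = ∏ j with j.val < m, _root_.stdGaussian n (B j) := by
  induction m with
  | zero => simp
  | succ m ih =>
    set i : Fin N := ⟨m, hm⟩ with hi
    have hfil : (Finset.univ.filter fun j : Fin N => j.val < m + 1)
        = insert i (Finset.univ.filter fun j : Fin N => j.val < m) := by
      ext j
      simp [Fin.ext_iff, hi]
      omega
    have hni : i ∉ (Finset.univ.filter fun j : Fin N => j.val < m) := by simp [hi]
    set h : (Fin n → ℝ) → (Fin n → ℝ) → Set (Fin n → ℝ) → ℝ≥0∞ := fun d w B =>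
      girsanovStep d w * B.indicator 1 (w - d) with hh
    set X : Ω → ℝ≥0∞ := fun ω => ∏ j with j.val < m, h (D j ω) (W j ω) (B j) with hX
    have hXm : Measurable X := by
      refine Finset.measurable_fun_prod _ fun j hj => ?_
      exact measurable_girsanov_term (hDmeas j) (hWmeas j) (hB j)
    have hind : IndepFun (fun ω => (X ω, D i ω)) (W i) P := by
      refine IndepFun.symm ?_
      rw [IndepFun_iff_Indep]
      let past : MeasurableSpace Ω :=
        ((⨆ j : Fin N, ⨆ _ : j < i, MeasurableSpace.comap (W j) inferInstance) ⊔
            (⨆ j : Fin N, ⨆ _ : j ≤ i, MeasurableSpace.comap (D j) inferInstance))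
      have hWp : ∀ j < i, Measurable[past] (W j) := fun j hj =>
        measurable_iff_comap_le.2 (le_sup_of_le_left (le_iSup₂_of_le j hj le_rfl))
      have hDp : ∀ j ≤ i, Measurable[past] (D j) := fun j hj =>
        measurable_iff_comap_le.2 (le_sup_of_le_right (le_iSup₂_of_le j hj le_rfl))
      have hXp : Measurable[past] X := by
        refine @Finset.measurable_fun_prod _ _ _ _ _ _ past _ _ fun j hj => ?_
        have hj' : j < i := by simpa [Fin.lt_def, hi] using hj
        exact measurable_girsanov_term (hDp j hj'.le) (hWp j hj') (hB j)
      exact indep_of_indep_of_le_right (hWpast i)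
        (measurable_iff_comap_le.1 (hXp.prodMk (hDp i le_rfl)))
    have hXD : Measurable fun ω => (X ω, D i ω) := hXm.prodMk (hDmeas i)
    have hmap := hind.map_prod_eq_prod_map_map hXD.aemeasurable (hWmeas i).aemeasurable
    haveI : IsProbabilityMeasure (_root_.stdGaussian n) := by
      unfold _root_.stdGaussian; infer_instance
    have hF : Measurable fun p : (ℝ≥0∞ × (Fin n → ℝ)) × (Fin n → ℝ) =>
        p.1.1 * h p.1.2 p.2 (B i) :=
      (measurable_fst.comp measurable_fst).mul
        (measurable_girsanov_term (measurable_snd.comp measurable_fst) measurable_snd (hB i))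
    have key : ∫⁻ ω, X ω * h (D i ω) (W i ω) (B i) ∂P
        = (∫⁻ ω, X ω ∂P) * _root_.stdGaussian n (B i) := by
      have e1 := lintegral_map (μ := P) hF (hXD.prodMk (hWmeas i))
      rw [hmap, hWlaw i, lintegral_prod _ hF.aemeasurable] at e1
      rw [← e1, lintegral_map hF.lintegral_prod_right' hXD]
      rw [← lintegral_mul_const _ hXm]
      refine lintegral_congr fun ω => ?_
      dsimp only
      have hmm : Measurable fun w => h (D i ω) w (B i) :=
        measurable_girsanov_term measurable_const measurable_id (hB i)
      rw [lintegral_const_mul _ hmm, hh]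
      dsimp only
      rw [girsanov_lintegral _ (hB i)]
    rw [hfil, Finset.prod_insert hni, ← ih (by omega), mul_comm, ← key]
    refine lintegral_congr fun ω => ?_
    rw [Finset.prod_insert hni, mul_comm]

/-- **Discrete-time Girsanov theorem.**
Let `W₀,…,W_{N−1}` be mutually independent random vectors with i.i.d. standard normal
coordinates and `D₀,…,D_{N−1}` bounded measurable random vectors such that each `Wᵢ` is
independent of the σ-algebra generated by `(W₀,…,W_{i−1}, D₀,…,D_i)`.  With
`Θ_N := exp(∑ⱼ (−½‖Dⱼ‖² + ⟨Dⱼ, Wⱼ⟩))` and `Q := P.withDensity Θ_N`, the measure `Q` is a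
probability measure and under `Q` the vectors `Wᵢ − Dᵢ` are mutually independent, each with
i.i.d. standard normal coordinates. -/
theorem discrete_time_girsanov
    {Ω : Type*} [mΩ : MeasurableSpace Ω]
    (P : Measure Ω) [IsProbabilityMeasure P]
    {n N : ℕ}
    (W D : Fin N → Ω → Fin n → ℝ)
    (hWmeas : ∀ i, Measurable (W i)) (hDmeas : ∀ i, Measurable (D i))
    (hWlaw : ∀ i, Measure.map (W i) P = stdGaussian n)
    (hWiIndep : iIndepFun W P)
    (hDbound : ∀ i, ∃ C, ∀ ω j, |D i ω j| ≤ C)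
    (hWpast : ∀ i : Fin N,
      Indep (MeasurableSpace.comap (W i) inferInstance)
        ((⨆ j : Fin N, ⨆ _ : j < i, MeasurableSpace.comap (W j) inferInstance) ⊔
          (⨆ j : Fin N, ⨆ _ : j ≤ i, MeasurableSpace.comap (D j) inferInstance)) P)
    (Θ : Ω → ℝ)
    (hΘ : ∀ ω, Θ ω =
      Real.exp (∑ j, (-(1 / 2) * (∑ k, (D j ω k) ^ 2) + ∑ k, D j ω k * W j ω k)))
    (Q : Measure Ω) (hQ : Q = P.withDensity fun ω => ENNReal.ofReal (Θ ω)) :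
    IsProbabilityMeasure Q ∧
      iIndepFun (fun i ω => W i ω - D i ω) Q ∧
      ∀ i, Measure.map (fun ω => W i ω - D i ω) Q = stdGaussian n := by
  have hWX : ∀ i, Measurable fun ω => W i ω - D i ω := fun i => (hWmeas i).sub (hDmeas i)
  have hall : Measurable fun ω i => W i ω - D i ω := measurable_pi_lambda _ hWX
  have hg : IsProbabilityMeasure (_root_.stdGaussian n) := by
    unfold _root_.stdGaussian; infer_instance
  have hdens : ∀ ω, ENNReal.ofReal (Θ ω) = ∏ j, girsanovStep (D j ω) (W j ω) := fun ω => by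
    rw [hΘ, Real.exp_sum, ENNReal.ofReal_prod_of_nonneg (fun _ _ => (Real.exp_pos _).le)]
    rfl
  have hbox : Measure.map (fun ω i => W i ω - D i ω) Q
      = Measure.pi fun _ : Fin N => _root_.stdGaussian n := by
    symm
    refine Measure.pi_eq fun B hB => ?_
    have hpi : MeasurableSet (Set.univ.pi B) := MeasurableSet.univ_pi hB
    have h := girsanov_partial P W D hWmeas hDmeas hWlaw hWpast B hB N le_rfl
    have hf : (Finset.univ.filter fun j : Fin N => j.val < N) = Finset.univ := by
      ext j; simp
    rw [hf] at h
    rw [← h, hQ, Measure.map_apply hall hpi, withDensity_apply _ (hall hpi),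
      ← lintegral_indicator (hall hpi)]
    refine lintegral_congr fun ω => ?_
    rw [Finset.prod_mul_distrib, ← hdens]
    by_cases hw : (fun i => W i ω - D i ω) ∈ Set.univ.pi B
    · rw [Set.indicator_of_mem
        (show ω ∈ (fun ω i => W i ω - D i ω) ⁻¹' Set.univ.pi B from hw),
        Finset.prod_eq_one, mul_one]
      intro i _
      rw [Set.indicator_of_mem (hw i (Set.mem_univ i)), Pi.one_apply]
    · rw [Set.indicator_of_notMem
        (show ω ∉ (fun ω i => W i ω - D i ω) ⁻¹' Set.univ.pi B from hw)]
      have : ∃ i, W i ω - D i ω ∉ B i := by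
        by_contra hcon
        push Not at hcon
        exact hw fun i _ => hcon i
      obtain ⟨i, hi⟩ := this
      rw [Finset.prod_eq_zero (Finset.mem_univ i), mul_zero]
      rw [Set.indicator_of_notMem hi]
  have hprob : IsProbabilityMeasure Q := by
    refine ⟨?_⟩
    have := congrArg (fun μ => μ Set.univ) hbox
    simpa [Measure.map_apply hall MeasurableSet.univ] using this
  have hlaw : ∀ i, Measure.map (fun ω => W i ω - D i ω) Q = _root_.stdGaussian n := fun i => by
    rw [← (measurePreserving_eval (fun _ : Fin N => _root_.stdGaussian n) i).map_eq, ← hbox,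
      Measure.map_map (measurable_pi_apply i) hall]
    rfl
  refine ⟨hprob, ?_, hlaw⟩
  rw [iIndepFun_iff_map_fun_eq_pi_map (fun i => (hWX i).aemeasurable), hbox]
  simp only [hlaw]
end
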